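/- For θ ∈ [0,1) and κ ≥ 0 let P_{θ,κ}(t) = C(κ)·exp(κ·cos(2π(t−θ))) for t ∈ [0,1), where C(κ) = (∫₀¹ exp(κ·cos(2πs)) ds)^{−1}, be the von Mises density. If (θ,κ) and (θ̃,κ̃) are parameters such that the functions P_{θ,κ} and P_{θ̃,κ̃} are not identical, then the set {t ∈ [0,1) : P_{θ,κ}(t) = P_{θ̃,κ̃}(t)} contains exactly two elements. -/

import Mathlib

/-!
Dividing one density by the other and taking logarithms, the equation `P_{θ,κ}(t) = P_{θ',κ'}(t)`
becomes `κ cos(2π(t-θ)) - κ' cos(2π(t-θ')) = c` with `c` independent of `t`. The left-hand side is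
a single harmonic `R cos(2πt - φ)`, where `R e^{iφ} = κ e^{2πiθ} - κ' e^{2πiθ'}`. If `|c| ≥ R`, one
density dominates the other pointwise; as both are continuous and integrate to `1` over a period
(`integral_vonMisesDensity`), they would coincide (`eqOn_of_vonMisesDensity_le`). Hence `|c| < R`,
and `R cos(2πt - φ) = c` has exactly two solutions per period (`ncard_cos_eq`).
-/

open MeasureTheory Filter Real
open scoped ENNReal NNReal

noncomputable section

/-- Normalizing constant of the von Mises density:
`C(κ) = (∫₀¹ exp(κ cos(2πs)) ds)⁻¹`. -/
def vonMisesC (κ : ℝ) : ℝ := (∫ s in (0:ℝ)..1, Real.exp (κ * Real.cos (2 * π * s)))⁻¹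

/-- Von Mises density `P_{θ,κ}(t) = C(κ)·exp(κ cos(2π(t−θ)))` on `[0,1)`. -/
def vonMisesDensity (θ κ t : ℝ) : ℝ :=
  vonMisesC κ * Real.exp (κ * Real.cos (2 * π * (t - θ)))

lemma continuous_vonMisesDensity (θ κ : ℝ) : Continuous (vonMisesDensity θ κ) := by
  unfold vonMisesDensity
  fun_prop

lemma integral_exp_cos_pos (κ : ℝ) :
    0 < ∫ s in (0:ℝ)..1, Real.exp (κ * Real.cos (2 * π * s)) := by
  apply intervalIntegral.intervalIntegral_pos_of_pos
  · exact Continuous.intervalIntegrable (by fun_prop) _ _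
  · intro x
    positivity
  · norm_num

lemma vonMisesC_pos (κ : ℝ) : 0 < vonMisesC κ :=
  inv_pos.mpr (integral_exp_cos_pos κ)

lemma integral_vonMisesDensity (θ κ : ℝ) : ∫ t in (0:ℝ)..1, vonMisesDensity θ κ t = 1 := by
  have hper : Function.Periodic (fun s : ℝ => Real.exp (κ * Real.cos (2 * π * s))) 1 := by
    intro s
    simp only [mul_add, mul_one, Real.cos_add_two_pi]
  have h := hper.intervalIntegral_add_eq (0 - θ) 0
  unfold vonMisesDensity
  rw [intervalIntegral.integral_const_mul,
    intervalIntegral.integral_comp_sub_right (fun s => Real.exp (κ * Real.cos (2 * π * s))) θ,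
    show (1:ℝ) - θ = 0 - θ + 1 by ring, h, zero_add]
  exact inv_mul_cancel₀ (integral_exp_cos_pos κ).ne'

/-- Pointwise domination between two densities forces equality, since both have integral `1`. -/
lemma eqOn_of_vonMisesDensity_le (θ θ' κ κ' : ℝ)
    (hle : ∀ t, vonMisesDensity θ κ t ≤ vonMisesDensity θ' κ' t) :
    ∀ t ∈ Set.Ico (0:ℝ) 1, vonMisesDensity θ κ t = vonMisesDensity θ' κ' t := by
  intro t ht
  by_contra hne
  have hlt := intervalIntegral.integral_lt_integral_of_continuousOn_of_le_of_exists_lt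
    (zero_lt_one : (0:ℝ) < 1) (continuous_vonMisesDensity θ κ).continuousOn
    (continuous_vonMisesDensity θ' κ').continuousOn (fun x _ => hle x)
    ⟨t, Set.Ico_subset_Icc_self ht, lt_of_le_of_ne (hle t) hne⟩
  rw [integral_vonMisesDensity, integral_vonMisesDensity] at hlt
  exact lt_irrefl _ hlt

/-- Difference of two harmonics of the same frequency as one harmonic. -/
lemma exists_harmonic (θ θ' κ κ' : ℝ) : ∃ R φ : ℝ, 0 ≤ R ∧ ∀ t : ℝ,
    κ * Real.cos (2 * π * (t - θ)) - κ' * Real.cos (2 * π * (t - θ')) =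
      R * Real.cos (2 * π * t - φ) := by
  -- amplitude and phase are the modulus and argument of `κ e^{2πiθ} - κ' e^{2πiθ'}`
  let z : ℂ := ⟨κ * Real.cos (2 * π * θ) - κ' * Real.cos (2 * π * θ'),
    κ * Real.sin (2 * π * θ) - κ' * Real.sin (2 * π * θ')⟩
  refine ⟨‖z‖, z.arg, norm_nonneg _, fun t => ?_⟩
  have h1 : ‖z‖ * Real.cos z.arg = _ := Complex.norm_mul_cos_arg z
  have h2 : ‖z‖ * Real.sin z.arg = _ := Complex.norm_mul_sin_arg z
  simp only [z] at h1 h2 ⊢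
  rw [mul_sub, mul_sub, Real.cos_sub, Real.cos_sub, Real.cos_sub]
  linear_combination (-Real.cos (2 * π * t)) * h1 - Real.sin (2 * π * t) * h2

/-- A nonextremal level of a cosine wave is attained exactly twice per period. -/
lemma ncard_cos_eq (φ x : ℝ) (h1 : -1 < x) (h2 : x < 1) :
    {t ∈ Set.Ico (0:ℝ) 1 | Real.cos (2 * π * t - φ) = x}.ncard = 2 := by
  set α := Real.arccos x with hα
  have hcos : Real.cos α = x := Real.cos_arccos h1.le h2.le
  have hα0 : 0 < α := Real.arccos_pos.mpr h2
  have hαπ : α < π := by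
    refine lt_of_le_of_ne (Real.arccos_le_pi x) fun h => ?_
    rw [h, Real.cos_pi] at hcos
    linarith
  have hπ := Real.pi_pos
  have hset : {t ∈ Set.Ico (0:ℝ) 1 | Real.cos (2 * π * t - φ) = x} =
      {Int.fract ((φ + α) / (2 * π)), Int.fract ((φ - α) / (2 * π))} := by
    ext t
    simp only [Set.mem_ofPred_eq, Set.mem_insert_iff, Set.mem_singleton_iff, Set.mem_Ico]
    rw [← hcos, Real.cos_eq_cos_iff, eq_comm (a := t), eq_comm (a := t), Int.fract_eq_iff,
      Int.fract_eq_iff]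
    constructor
    · rintro ⟨⟨h0, h1⟩, k, hk | hk⟩
      · refine Or.inl ⟨h0, h1, k, ?_⟩
        field_simp
        linarith
      · refine Or.inr ⟨h0, h1, -k, ?_⟩
        push_cast
        field_simp
        linarith
    · rintro (⟨h0, h1, k, hk⟩ | ⟨h0, h1, k, hk⟩)
      · refine ⟨⟨h0, h1⟩, k, Or.inl ?_⟩
        field_simp at hk
        linarith
      · refine ⟨⟨h0, h1⟩, -k, Or.inr ?_⟩
        push_cast
        field_simp at hk
        linarith
  rw [hset, Set.ncard_pair]
  intro h
  -- the two phases differ by `α / π ∈ (0, 1)`, which is not an integer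
  obtain ⟨k, hk⟩ := Int.fract_eq_fract.mp h
  have hk' : α = k * π := by
    field_simp at hk
    linarith
  have hk0 : (0:ℝ) < k := by
    by_contra hle
    nlinarith
  have hk1 : (k:ℝ) < 1 := by
    by_contra hle
    nlinarith
  have hk0' : 0 < k := by exact_mod_cast hk0
  have hk1' : k < 1 := by exact_mod_cast hk1
  omega

lemma vonMisesDensity_le_iff (θ θ' κ κ' t : ℝ) :
    vonMisesDensity θ κ t ≤ vonMisesDensity θ' κ' t ↔
      κ * Real.cos (2 * π * (t - θ)) - κ' * Real.cos (2 * π * (t - θ')) ≤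
        Real.log (vonMisesC κ') - Real.log (vonMisesC κ) := by
  have hC := vonMisesC_pos κ
  have hC' := vonMisesC_pos κ'
  unfold vonMisesDensity
  rw [← Real.log_le_log_iff (by positivity) (by positivity),
    Real.log_mul hC.ne' (Real.exp_pos _).ne', Real.log_mul hC'.ne' (Real.exp_pos _).ne',
    Real.log_exp, Real.log_exp]
  constructor <;> intro h <;> linarith

/-- If two von Mises densities `P_{θ,κ}` and `P_{θ̃,κ̃}` are not identical
on `[0,1)`, then they intersect in exactly two points of `[0,1)`. -/
theorem vonMises_densities_intersect_twice
    (θ θ' : ℝ) (hθ : θ ∈ Set.Ico (0:ℝ) 1) (hθ' : θ' ∈ Set.Ico (0:ℝ) 1)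
    (κ κ' : ℝ) (hκ : 0 ≤ κ) (hκ' : 0 ≤ κ')
    (hne : ¬ ∀ t ∈ Set.Ico (0:ℝ) 1, vonMisesDensity θ κ t = vonMisesDensity θ' κ' t) :
    {t ∈ Set.Ico (0:ℝ) 1 | vonMisesDensity θ κ t = vonMisesDensity θ' κ' t}.ncard = 2 := by
  obtain ⟨R, φ, hR, hharm⟩ := exists_harmonic θ θ' κ κ'
  have hle := vonMisesDensity_le_iff θ θ' κ κ'
  have hge := vonMisesDensity_le_iff θ' θ κ' κ
  set c := Real.log (vonMisesC κ') - Real.log (vonMisesC κ) with hc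
  have hcR : c < R := by
    by_contra! h
    refine hne (eqOn_of_vonMisesDensity_le θ θ' κ κ' fun t => ?_)
    rw [hle, hharm]
    nlinarith [Real.cos_le_one (2 * π * t - φ)]
  have hRc : -R < c := by
    by_contra! h
    refine hne fun t ht => (eqOn_of_vonMisesDensity_le θ' θ κ' κ (fun t => ?_) t ht).symm
    rw [hge]
    nlinarith [Real.neg_one_le_cos (2 * π * t - φ), hharm t]
  have hR0 : 0 < R := by linarith
  rw [← ncard_cos_eq φ (c / R) (by rw [lt_div_iff₀ hR0]; linarith)
    (by rw [div_lt_one hR0]; exact hcR)]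
  congr 1
  ext t
  simp only [Set.mem_ofPred_eq]
  refine and_congr_right fun _ => ?_
  rw [le_antisymm_iff, hle, hge, eq_div_iff hR0.ne']
  have := hharm t
  constructor
  · rintro ⟨h1, h2⟩
    linarith
  · intro h
    constructor <;> linarith

end
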